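/- If G is a connected n-vertex chordal graph, then lpt(G) ≤ (4(1 + ⌊log₂ n⌋) + 5)(1 + ⌊log₂ n⌋). -/

import Mathlib

open SimpleGraph

/-- A graph is chordal if every cycle on at least 4 vertices has a chord
(an edge of the graph joining two vertices of the cycle that is not an edge of the cycle). -/
def IsChordal {V : Type} (G : SimpleGraph V) : Prop :=
  ∀ (v : V) (c : G.Walk v v), c.IsCycle → 4 ≤ c.length →
    ∃ a b : V, a ∈ c.support ∧ b ∈ c.support ∧ G.Adj a b ∧ s(a, b) ∉ c.edges

/-- A tree representation of `G` with host tree `T`: each vertex `u` of `G` gets a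
nonempty subtree `S u` of `T`, and distinct vertices are adjacent iff their subtrees meet. -/
structure TreeRep {V W : Type} (G : SimpleGraph V) (T : SimpleGraph W) : Type where
  isTree : T.IsTree
  S : V → Set W
  subtree_connected : ∀ u : V, (T.induce (S u)).Connected
  adj_iff : ∀ u v : V, u ≠ v → (G.Adj u v ↔ (S u ∩ S v).Nonempty)

/-- A tree representation is minimal if no tree representation of `G` has a host tree
with fewer vertices. -/
def TreeRep.IsMinimal {V W : Type} [Fintype W] {G : SimpleGraph V} {T : SimpleGraph W}
    (_R : TreeRep G T) : Prop :=
  ∀ (W' : Type) [Fintype W'] (T' : SimpleGraph W'),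
    Nonempty (TreeRep G T') → Fintype.card W ≤ Fintype.card W'

/-- The bag of a host tree vertex `x`. -/
def TreeRep.bag {V W : Type} {G : SimpleGraph V} {T : SimpleGraph W}
    (R : TreeRep G T) (x : W) : Set V :=
  {u : V | x ∈ R.S u}

/-- In `T` rooted at `r`, the (vertex set of the) subtree rooted at `x`: all vertices `w`
such that the `r`–`w` path contains `x`. -/
def rootedSubtree {W : Type} (T : SimpleGraph W) (r x : W) : Set W :=
  {w : W | ∀ p : T.Walk r w, p.IsPath → x ∈ p.support}

/-- The core of a subgraph `H` of `G`: the union over edges `uv` of `H` of `V(S u ∩ S v)`,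
a set of host-tree vertices. -/
def TreeRep.core {V W : Type} {G : SimpleGraph V} {T : SimpleGraph W}
    (R : TreeRep G T) (H : G.Subgraph) : Set W :=
  {t : W | ∃ u v : V, H.Adj u v ∧ t ∈ R.S u ∧ t ∈ R.S v}

/-- `C` is a connected component of the subgraph of `T` induced on the vertex set `s`. -/
def IsCompOf {W : Type} (T : SimpleGraph W) (s C : Set W) : Prop :=
  C.Nonempty ∧ C ⊆ s ∧ (T.induce C).Connected ∧
    ∀ ⦃a b : W⦄, a ∈ C → b ∈ s → T.Adj a b → b ∈ C

/-- A graph is 2-connected if it has more than 2 vertices and deleting any one vertex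
leaves it connected. -/
def TwoConnected {V : Type} (G : SimpleGraph V) : Prop :=
  2 < Nat.card V ∧ ∀ v : V, (G.induce {v}ᶜ).Connected

/-- `G` is `k`-connected: more than `k` vertices, and deleting fewer than `k` vertices
leaves it connected. -/
def IsKConnectedGraph {V : Type} (G : SimpleGraph V) (k : ℕ) : Prop :=
  k < Nat.card V ∧ ∀ s : Set V, s.Finite → s.ncard < k → (G.induce sᶜ).Connected

/-- The vertex connectivity `κ(G)`: the maximum `k` such that `G` is `k`-connected. -/
noncomputable def vertexConnectivity {V : Type} (G : SimpleGraph V) : ℕ :=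
  sSup {k : ℕ | IsKConnectedGraph G k}

/-- `p` is a path of maximum length in `G`. -/
def IsLongestPath {V : Type} (G : SimpleGraph V) {a b : V} (p : G.Walk a b) : Prop :=
  p.IsPath ∧ ∀ (c d : V) (q : G.Walk c d), q.IsPath → q.length ≤ p.length

/-- `c` is a cycle of maximum length in `G`. -/
def IsLongestCycle {V : Type} (G : SimpleGraph V) {a : V} (c : G.Walk a a) : Prop :=
  c.IsCycle ∧ ∀ (d : V) (q : G.Walk d d), q.IsCycle → q.length ≤ c.length

/-- The longest path transversal number of `G`: the least size of a set of vertices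
meeting every longest path. -/
noncomputable def lpt {V : Type} (G : SimpleGraph V) : ℕ :=
  sInf {k : ℕ | ∃ A : Set V, A.Finite ∧ A.ncard = k ∧
    ∀ (a b : V) (p : G.Walk a b), IsLongestPath G p → ∃ v ∈ A, v ∈ p.support}

/-- The longest cycle transversal number of `G`: the least size of a set of vertices
meeting every longest cycle. -/
noncomputable def lct {V : Type} (G : SimpleGraph V) : ℕ :=
  sInf {k : ℕ | ∃ A : Set V, A.Finite ∧ A.ncard = k ∧
    ∀ (a : V) (c : G.Walk a a), IsLongestCycle G c → ∃ v ∈ A, v ∈ c.support}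

/-- `DQX T q X Q0`: the union, over `y ∈ Q0`, of the component of `X − E(Q)` containing
`y` (all vertices joined to some `y ∈ Q0` by a walk inside `X` avoiding the edges of `q`). -/
def DQX {W : Type} (T : SimpleGraph W) {x z : W} (q : T.Walk x z) (X : Set W)
    (Q0 : Set W) : Set W :=
  {w : W | ∃ y ∈ Q0, ∃ d : (T.deleteEdges {e : Sym2 W | e ∈ q.edges}).Walk y w,
    ∀ a ∈ d.support, a ∈ X}

/-- Cutter can force the Cutter–Chooser game from position `(X, x)` (a subtree `X` of the
host tree, rooted at `x`) to end within `t` rounds: Cutter picks `z ∈ X` and cuts along the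
`x`–`z` path `Q` in `X`; either `X = Q` (game over), or for every component `X'` of
`X − V(Q)` (with its root `x'`, the vertex of `X'` adjacent to `Q`) that Chooser may pick,
Cutter wins within `t - 1` further rounds. -/
def cutterWins {W : Type} (T : SimpleGraph W) : ℕ → Set W → W → Prop
  | 0, _, _ => False
  | t + 1, X, x =>
      ∃ z ∈ X, ∃ p : T.Walk x z, p.IsPath ∧ (∀ w ∈ p.support, w ∈ X) ∧
        (X = {w : W | w ∈ p.support} ∨
          ∀ (X' : Set W) (x' : W), IsCompOf T (X \ {w : W | w ∈ p.support}) X' →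
            x' ∈ X' → (∃ u ∈ p.support, T.Adj u x') → cutterWins T t X' x')

/-- `ccg(X, x)`: the number of rounds of the Cutter–Chooser game on the subtree `X` of the
host tree rooted at `x`, under optimal play. -/
noncomputable def ccgOn {W : Type} (T : SimpleGraph W) (X : Set W) (x : W) : ℕ :=
  sInf {t : ℕ | cutterWins T t X x}

/-- `ccg(T)`: the minimum over roots `r` of `ccg(T, r)`. -/
noncomputable def ccg {W : Type} (T : SimpleGraph W) : ℕ :=
  sInf (Set.range fun r : W => ccgOn T Set.univ r)

/-- A subdivided caterpillar: a tree having a (spine) path containing every vertex of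
degree at least 3. -/
def IsSubdividedCaterpillar {W : Type} (T : SimpleGraph W) : Prop :=
  T.IsTree ∧ ∃ (a b : W) (q : T.Walk a b), q.IsPath ∧
    ∀ v : W, 3 ≤ (T.neighborSet v).ncard → v ∈ q.support

/-- A subdivided star: a tree with at most one vertex of degree at least 3. -/
def IsSubdividedStar {W : Type} (T : SimpleGraph W) : Prop :=
  T.IsTree ∧ ∀ v w : W, 3 ≤ (T.neighborSet v).ncard → 3 ≤ (T.neighborSet w).ncard → v = w

/-- A leaf: a vertex of degree 1. -/
def IsLeaf {W : Type} (T : SimpleGraph W) (v : W) : Prop := (T.neighborSet v).ncard = 1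

/-- `mf T`: the maximum over edges `e` of `T` of the minimum number of leaves of `T`
contained in a component of `T − e`. -/
noncomputable def mf {W : Type} (T : SimpleGraph W) : ℕ :=
  sSup {k : ℕ | ∃ u v : W, T.Adj u v ∧
    k = min {w : W | IsLeaf T w ∧ (T.deleteEdges {s(u, v)}).Reachable u w}.ncard
            {w : W | IsLeaf T w ∧ (T.deleteEdges {s(u, v)}).Reachable v w}.ncard}

/-- In `T` rooted at `r`, `v` is a child of `u`. -/
def IsChildIn {W : Type} (T : SimpleGraph W) (r u v : W) : Prop :=
  T.Adj u v ∧ ∀ p : T.Walk r v, p.IsPath → u ∈ p.support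

/-- In `T` rooted at `r`, `u` is childless. -/
def IsChildlessIn {W : Type} (T : SimpleGraph W) (r u : W) : Prop :=
  ¬ ∃ v : W, IsChildIn T r u v

/-!
Order the vertices of the chordal graph by a perfect elimination ordering and hang each vertex
below the earliest of its later neighbours. In the resulting elimination tree the edges leaving the
subtree of `x` end in the clique of later neighbours of `x`.

Two observations about longest paths drive the proof. First, any two of them meet, and this yields a
subtree which every longest path avoiding two fixed vertices both enters and leaves. Second, given a
family of subtrees with common hubs `b` and `b'` (vertices adjacent or equal to every vertex
through which the subtrees can be left), take among the segments of paths lying in one of the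
subtrees a longest one: a longest path that avoids the hubs, enters some subtree of the family, and
misses this segment together with its attachments could be rerouted through it. So, up to a bounded
number of vertices, one subtree of the family is met by all of these paths; terminal and inner
segments are treated separately.

The family consists of the subtrees hanging off the heavy path of the current subtree. They have at
most half its size, so the process stops after `1 + log₂ n` rounds.
-/

/-! ### Simplicial vertices and perfect elimination orderings -/

theorem exists_isPath_isChordless_support_subset {V : Type*} {G : SimpleGraph V} {u v : V}
    (p : G.Walk u v) : ∃ q : G.Walk u v, q.IsPath ∧ q.IsChordless ∧ q.support ⊆ p.support := by
  classical
  obtain ⟨q₀, hq₀, hmin⟩ := WellFounded.has_min (measure fun q : G.Walk u v => q.length).wf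
    {q | q.support ⊆ p.support} ⟨p, List.Subset.refl _⟩
  have hq : q₀.bypass.support ⊆ p.support :=
    List.Subset.trans q₀.support_bypass_subset_support hq₀
  have hshort : ∀ q' : G.Walk u v, q'.support ⊆ p.support → q₀.bypass.length ≤ q'.length :=
    fun q' hq' => q₀.length_bypass_le_length.trans (not_lt.1 (hmin q' hq'))
  generalize q₀.bypass = q, q₀.bypass_isPath = hpath at hq hshort
  have mem_edges_of_lt : ∀ i j, i < j → j ≤ q.length → G.Adj (q.getVert i) (q.getVert j) →
      s(q.getVert i, q.getVert j) ∈ q.edges := by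
    intro i j hij hj hadj
    let shortcut := (q.take i).append (.cons hadj (q.drop j))
    have hsub : shortcut.support ⊆ p.support := by
      intro x hx
      simp only [shortcut, Walk.mem_support_append_iff, Walk.support_cons, List.mem_cons] at hx
      rcases hx with hx | rfl | hx
      · exact hq ((q.isSubwalk_take i).support_subset hx)
      · exact hq (q.getVert_mem_support i)
      · exact hq ((q.isSubwalk_drop j).support_subset hx)
    have hlen := hshort shortcut hsub
    simp only [shortcut, Walk.length_append, Walk.take_length, Walk.length_cons,
      Walk.drop_length] at hlen
    obtain rfl : j = i + 1 := by omega
    exact q.mk_mem_edges_iff_exists.2 ⟨i, by omega, rfl⟩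
  refine ⟨q, hpath, Walk.isChordless_iff_forall_mem_edges.2 fun a b ha hb hab => ?_, hq⟩
  obtain ⟨i, rfl, hi⟩ := Walk.mem_support_iff_exists_getVert.1 ha
  obtain ⟨j, rfl, hj⟩ := Walk.mem_support_iff_exists_getVert.1 hb
  rcases lt_trichotomy i j with hij | rfl | hij
  · exact mem_edges_of_lt i j hij hj hab
  · exact absurd hab (G.loopless.irrefl _)
  · exact Sym2.eq_swap ▸ mem_edges_of_lt j i hij hi hab.symm

theorem IsChordal.adj_of_walk {V : Type} {G : SimpleGraph V} (hG : IsChordal G) {h u v : V}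
    (huv : u ≠ v) (hu : G.Adj h u) (hv : G.Adj h v) (p : G.Walk u v) (hp : h ∉ p.support)
    (hinner : ∀ x ∈ p.support, G.Adj h x → x = u ∨ x = v) : G.Adj u v := by
  obtain ⟨q, hq, hchordless, hsub⟩ := exists_isPath_isChordless_support_subset p
  by_contra hnadj
  have hhq : h ∉ q.support := fun hx => hp (hsub hx)
  have hlen : 2 ≤ q.length := by
    by_contra! hlt
    interval_cases hl : q.length
    · exact huv (Walk.eq_of_length_eq_zero hl)
    · exact hnadj (Walk.adj_of_length_eq_one hl)
  let c : G.Walk h h := .cons hu (q.concat hv.symm)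
  have hcycle : c.IsCycle := by
    refine (Walk.cons_isCycle_iff _ _).2 ⟨hq.concat hhq hv.symm, fun hmem => ?_⟩
    simp only [Walk.edges_concat, List.concat_eq_append, List.mem_append, List.mem_singleton,
      Sym2.eq_iff] at hmem
    rcases hmem with hmem | ⟨rfl, -⟩ | ⟨-, rfl⟩
    · exact hhq (q.fst_mem_support_of_mem_edges hmem)
    · exact hv.ne rfl
    · exact huv rfl
  have hmem_c : ∀ x, x ∈ c.support ↔ x = h ∨ x ∈ q.support := by
    simp +contextual [c, Walk.support_concat, or_comm]
  have hspoke : ∀ x ∈ q.support, G.Adj h x → s(h, x) ∈ c.edges := by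
    intro x hx hhx
    rcases hinner x (hsub hx) hhx with rfl | rfl <;> simp [c, Walk.edges_concat, Sym2.eq_swap]
  obtain ⟨a, b, ha, hb, hab, hchord⟩ := hG h c hcycle (by simp [c]; omega)
  rw [hmem_c] at ha hb
  rcases ha with rfl | ha <;> rcases hb with rfl | hb
  · exact hab.ne rfl
  · exact hchord (hspoke b hb hab)
  · exact hchord (Sym2.eq_swap ▸ hspoke a ha hab.symm)
  · exact hchord (by simp [c, Walk.edges_concat, hchordless.mem_edges ha hb hab])

theorem exists_walk_support_subset_of_induce_preconnected {V : Type*} {G : SimpleGraph V}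
    {C : Set V} (hC : (G.induce C).Preconnected) {x y : V} (hx : x ∈ C) (hy : y ∈ C) :
    ∃ p : G.Walk x y, ∀ z ∈ p.support, z ∈ C := by
  obtain ⟨p⟩ := hC ⟨x, hx⟩ ⟨y, hy⟩
  refine ⟨p.map (Embedding.induce C).toHom, fun z hz => ?_⟩
  obtain ⟨z, -, rfl⟩ := List.mem_map.1 (p.support_map _ ▸ hz)
  exact z.2

/-- The vertices of `S` outside `C` without a neighbour in `C`. -/
def remoteVertices {V : Type*} (G : SimpleGraph V) (S C : Set V) : Set V :=
  {g ∈ S | g ∉ C ∧ ∀ x ∈ C, ¬ G.Adj g x}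

theorem adj_of_mem_remoteVertices_of_maximal {V : Type*} {G : SimpleGraph V} {S C : Set V}
    (hC : Maximal (fun C => C ⊆ S ∧ (G.induce C).Connected ∧ (remoteVertices G S C).Nonempty) C)
    {v x g : V} (hvS : v ∈ S) (hvC : v ∉ C) (hx : x ∈ C) (hvx : G.Adj v x)
    (hg : g ∈ remoteVertices G S C) : G.Adj g v := by
  by_contra hgv
  have hgne : g ≠ v := by rintro rfl; exact hg.2.2 x hx hvx
  have hconn : (G.induce (C ∪ {v})).Connected :=
    connected_induce_union hC.prop.2.1.preconnected .of_subsingleton hx rfl hvx.symm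
  have hg' : g ∈ remoteVertices G S (C ∪ {v}) := by
    refine ⟨hg.1, by simp [hg.2.1, hgne], ?_⟩
    rintro z (hz | rfl)
    exacts [hg.2.2 z hz, hgv]
  have hsub : C ∪ {v} ⊆ S := Set.union_subset hC.prop.1 (Set.singleton_subset_iff.2 hvS)
  exact hvC (hC.le_of_ge ⟨hsub, hconn, g, hg'⟩ Set.subset_union_left (Or.inr rfl))

theorem IsChordal.adj_of_common_adj_of_mem_remoteVertices {V : Type} {G : SimpleGraph V}
    (hG : IsChordal G) {S C : Set V} (hC : (G.induce C).Preconnected) {g u v x y : V}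
    (hg : g ∈ remoteVertices G S C) (huv : u ≠ v) (hgu : G.Adj g u) (hgv : G.Adj g v)
    (hx : x ∈ C) (hy : y ∈ C) (hux : G.Adj u x) (hvy : G.Adj v y) : G.Adj u v := by
  obtain ⟨p, hp⟩ := exists_walk_support_subset_of_induce_preconnected hC hx hy
  have hsupport : ∀ z ∈ (Walk.cons hux (p.concat hvy.symm)).support,
      z = u ∨ z = v ∨ z ∈ C := by
    intro z hz
    simp only [Walk.support_cons, Walk.support_concat, List.mem_cons,
      List.mem_append, List.not_mem_nil, or_false] at hz
    exact hz.imp_right fun hz => hz.symm.imp_right (hp z)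
  refine hG.adj_of_walk huv hgu hgv (.cons hux (p.concat hvy.symm)) (fun hmem => ?_)
    fun z hz hgz => ?_
  · rcases hsupport g hmem with rfl | rfl | hgC
    exacts [hgu.ne rfl, hgv.ne rfl, hg.2.1 hgC]
  · rcases hsupport z hz with hzu | hzv | hzC
    exacts [.inl hzu, .inr hzv, absurd hgz (hg.2.2 z hzC)]

/-- Dirac's argument: take `C` maximal among the connected subsets of `S` that leave some vertex of
`S` remote. The boundary of `C` in `S` is complete to the remote vertices and, by chordality, a
clique, so a vertex that is simplicial among the remote ones is simplicial in `S`. -/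
theorem IsChordal.exists_isClique_neighborSet_inter {V : Type} [Finite V] {G : SimpleGraph V}
    (hG : IsChordal G) {S : Set V} (hS : S.Nonempty) :
    ∃ v ∈ S, G.IsClique (G.neighborSet v ∩ S) := by
  induction S using WellFoundedLT.induction with | ind S ih => ?_
  by_cases hclique : G.IsClique S
  · obtain ⟨v, hv⟩ := hS
    exact ⟨v, hv, hclique.subset Set.inter_subset_right⟩
  obtain ⟨u₀, hu₀, g₀, hg₀, hne₀, hnadj₀⟩ : ∃ u ∈ S, ∃ g ∈ S, u ≠ g ∧ ¬ G.Adj u g := by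
    simpa [IsClique, Set.Pairwise] using hclique
  obtain ⟨C, -, hC⟩ := Finite.exists_le_maximal
    (p := fun C => C ⊆ S ∧ (G.induce C).Connected ∧ (remoteVertices G S C).Nonempty) (a := {u₀})
    ⟨by simpa using hu₀, ⟨.of_subsingleton⟩, g₀, hg₀, hne₀.symm, by simpa [G.adj_comm] using hnadj₀⟩
  obtain ⟨hCS, hCconn, hremote⟩ := hC.prop
  obtain ⟨⟨c, hc⟩⟩ := hCconn.nonempty
  have hlt : remoteVertices G S C < S :=
    (Set.ssubset_iff_of_subset (Set.sep_subset _ _)).2 ⟨c, hCS hc, fun h => h.2.1 hc⟩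
  obtain ⟨v, hv, hvclique⟩ := ih _ hlt hremote
  have remote_or_boundary : ∀ u ∈ G.neighborSet v ∩ S,
      u ∈ remoteVertices G S C ∨ u ∉ C ∧ ∃ x ∈ C, G.Adj u x := by
    rintro u ⟨hvu, huS⟩
    have huC : u ∉ C := fun huC => hv.2.2 u huC hvu
    by_cases hu : ∃ x ∈ C, G.Adj u x
    · exact .inr ⟨huC, hu⟩
    · exact .inl ⟨huS, huC, fun x hx hux => hu ⟨x, hx, hux⟩⟩
  refine ⟨v, hv.1, fun u hu w hw huw => ?_⟩
  rcases remote_or_boundary u hu with hu' | ⟨huC, x, hx, hux⟩ <;>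
    rcases remote_or_boundary w hw with hw' | ⟨hwC, y, hy, hwy⟩
  · exact hvclique ⟨hu.1, hu'⟩ ⟨hw.1, hw'⟩ huw
  · exact adj_of_mem_remoteVertices_of_maximal hC hw.2 hwC hy hwy hu'
  · exact (adj_of_mem_remoteVertices_of_maximal hC hu.2 huC hx hux hw').symm
  · exact hG.adj_of_common_adj_of_mem_remoteVertices hCconn.preconnected hv huw hu.1 hw.1 hx hy
      hux hwy

/-- The neighbours of `v` that come after `v` in the order given by the rank function `r`. -/
def laterNeighbors {V : Type*} (G : SimpleGraph V) (r : V → ℕ) (v : V) : Set V :=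
  {u | r v < r u ∧ G.Adj v u}

/-- The rank function `r` lists the vertices of `G` in a perfect elimination ordering: the later
neighbours of each vertex form a clique. -/
structure IsPerfectElimination {V : Type*} (G : SimpleGraph V) (r : V → ℕ) : Prop where
  injective : Function.Injective r
  isClique_laterNeighbors : ∀ v, G.IsClique (laterNeighbors G r v)

theorem IsChordal.exists_isPerfectElimination {V : Type} [Finite V] {G : SimpleGraph V}
    (hG : IsChordal G) : ∃ r, IsPerfectElimination G r := by
  classical
  suffices h : ∀ S : Set V, ∃ r : V → ℕ, Set.InjOn r S ∧
      ∀ v ∈ S, G.IsClique (laterNeighbors G r v ∩ S) by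
    obtain ⟨r, hinj, hclique⟩ := h Set.univ
    exact ⟨r, Set.injOn_univ.1 hinj, fun v => by simpa using hclique v⟩
  intro S
  induction S using WellFoundedLT.induction with | ind S ih => ?_
  rcases S.eq_empty_or_nonempty with rfl | hS
  · exact ⟨fun _ => 0, by simp, by simp⟩
  obtain ⟨s, hs, hsclique⟩ := hG.exists_isClique_neighborSet_inter hS
  obtain ⟨r, hinj, hclique⟩ := ih (S \ {s}) (Set.sdiff_singleton_ssubset.2 hs)
  let r' : V → ℕ := Function.update (fun x => r x + 1) s 0
  have hr's : r' s = 0 := Function.update_self ..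
  have hr' : ∀ x ≠ s, r' x = r x + 1 := fun x hx => Function.update_of_ne hx ..
  refine ⟨r', fun x hx y hy hxy => ?_, fun v hv => ?_⟩
  · by_cases hxs : x = s <;> by_cases hys : y = s
    · rw [hxs, hys]
    · simp [hxs, hr's, hr' y hys] at hxy
    · simp [hys, hr's, hr' x hxs] at hxy
    · exact hinj ⟨hx, hxs⟩ ⟨hy, hys⟩ (by simpa [hr' x hxs, hr' y hys] using hxy)
  · by_cases hvs : v = s
    · subst hvs
      exact hsclique.subset (Set.inter_subset_inter_left S fun u hu => hu.2)
    · refine (hclique v ⟨hv, hvs⟩).subset fun u hu => ?_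
      have hus : u ≠ s := by rintro rfl; simpa [hr's] using hu.1.1
      have hlt := hu.1.1
      rw [hr' v hvs, hr' u hus] at hlt
      exact ⟨⟨by omega, hu.1.2⟩, hu.2, hus⟩

/-! ### The elimination tree -/

theorem exists_rel_of_reflTransGen_of_not {α : Type*} {R : α → α → Prop} {P : α → Prop} {a b : α}
    (h : Relation.ReflTransGen R a b) (ha : ¬ P a) (hb : P b) :
    ∃ c d, Relation.ReflTransGen R a c ∧ R c d ∧ Relation.ReflTransGen R d b ∧ ¬ P c ∧ P d := by
  induction h using Relation.ReflTransGen.head_induction_on with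
  | refl => exact absurd hb ha
  | @head a d had hdb ih =>
    by_cases hd : P d
    · exact ⟨a, d, .refl, had, hdb, ha, hd⟩
    · obtain ⟨c, e, hdc, hce, heb, hc, he⟩ := ih hd
      exact ⟨c, e, .head had hdc, hce, heb, hc, he⟩

/-- A vertex together with its later neighbours: the bag of `v` in the tree decomposition carried
by the elimination tree. -/
def bag {V : Type*} (G : SimpleGraph V) (r : V → ℕ) (v : V) : Set V :=
  insert v (laterNeighbors G r v)

/-- `y` is the parent of `v` in the elimination tree: the first of the later neighbours of `v`. -/
def IsParent {V : Type*} (G : SimpleGraph V) (r : V → ℕ) (v y : V) : Prop :=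
  y ∈ laterNeighbors G r v ∧ ∀ u ∈ laterNeighbors G r v, r y ≤ r u

/-- The subtree of the elimination tree that hangs from `v`, including `v`. -/
def descendants {V : Type*} (G : SimpleGraph V) (r : V → ℕ) (v : V) : Set V :=
  {w | Relation.ReflTransGen (IsParent G r) w v}

section EliminationTree

variable {V : Type*} {G : SimpleGraph V} {r : V → ℕ} {c u v w x y : V}

theorem mem_descendants_self : v ∈ descendants G r v := Relation.ReflTransGen.refl

theorem descendants_subset_of_mem (h : w ∈ descendants G r v) :
    descendants G r w ⊆ descendants G r v := fun _ hx => Relation.ReflTransGen.trans hx h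

theorem exists_isParent (h : (laterNeighbors G r v).Nonempty) : ∃ y, IsParent G r v y := by
  obtain ⟨y, hy, hmin⟩ := (measure r).wf.has_min _ h
  exact ⟨y, hy, fun u hu => not_lt.1 (hmin u hu)⟩

theorem IsParent.mem_descendants (h : IsParent G r c y) : c ∈ descendants G r y :=
  Relation.ReflTransGen.single h

theorem rank_le_of_mem_descendants (h : w ∈ descendants G r v) : r w ≤ r v := by
  induction h with
  | refl => exact le_rfl
  | tail _ hstep ih => exact ih.trans hstep.1.1.le

theorem disjoint_laterNeighbors_descendants :
    Disjoint (laterNeighbors G r v) (descendants G r v) :=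
  Set.disjoint_left.2 fun _ hu hmem => hu.1.not_ge (rank_le_of_mem_descendants hmem)

theorem IsParent.descendants_ssubset (h : IsParent G r c y) :
    descendants G r c ⊂ descendants G r y :=
  (Set.ssubset_iff_of_subset (descendants_subset_of_mem h.mem_descendants)).2
    ⟨y, mem_descendants_self, Set.disjoint_left.1 disjoint_laterNeighbors_descendants h.1⟩

namespace IsPerfectElimination

variable (hr : IsPerfectElimination G r)
include hr

theorem isClique_bag (v : V) : G.IsClique (bag G r v) :=
  (hr.isClique_laterNeighbors v).insert fun _ hu _ => hu.2

theorem laterNeighbors_subset_bag (h : IsParent G r c y) : laterNeighbors G r c ⊆ bag G r y := by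
  intro u hu
  by_cases huy : u = y
  · exact .inl huy
  · have hne : r y ≠ r u := fun heq => huy (hr.injective heq).symm
    exact .inr ⟨(h.2 u hu).lt_of_ne hne, hr.isClique_laterNeighbors c h.1 hu (Ne.symm huy)⟩

theorem descendants_total (hx : w ∈ descendants G r x) (hy : w ∈ descendants G r y) :
    x ∈ descendants G r y ∨ y ∈ descendants G r x :=
  Relation.ReflTransGen.total_of_right_unique
    (fun _ _ _ hab hac => hr.injective (le_antisymm (hab.2 _ hac.1) (hac.2 _ hab.1))) hx hy

theorem mem_descendants_of_mem_laterNeighbors (hu : u ∈ laterNeighbors G r w) :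
    w ∈ descendants G r u := by
  induction hn : r u - r w using Nat.strong_induction_on generalizing w with | _ n ih => ?_
  obtain ⟨y, hy⟩ := exists_isParent ⟨u, hu⟩
  rcases hr.laterNeighbors_subset_bag hy hu with rfl | huy
  · exact hy.mem_descendants
  · have hlt : r u - r y < n := by have := hy.1.1; have := huy.1; omega
    exact .head hy (ih _ hlt huy rfl)

theorem mem_laterNeighbors_of_adj (hw : w ∈ descendants G r v) (hu : u ∉ descendants G r v)
    (hadj : G.Adj w u) : u ∈ laterNeighbors G r v := by
  have huw : u ∈ laterNeighbors G r w := by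
    refine ⟨lt_of_not_ge fun hle => ?_, hadj⟩
    have hlt : r u < r w := hle.lt_of_ne fun heq => hadj.ne (hr.injective heq).symm
    exact hu (descendants_subset_of_mem hw
      (hr.mem_descendants_of_mem_laterNeighbors ⟨hlt, hadj.symm⟩))
  clear hadj
  induction hw using Relation.ReflTransGen.head_induction_on with
  | refl => exact huw
  | head hstep hyv ih =>
    refine ih ((hr.laterNeighbors_subset_bag hstep huw).resolve_left ?_)
    rintro rfl
    exact hu hyv

theorem exists_descendants_eq_univ [Finite V] (hconn : G.Connected) :
    ∃ t, descendants G r t = Set.univ := by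
  have := hconn.nonempty
  obtain ⟨t, ht⟩ := Finite.exists_max r
  refine ⟨t, Set.eq_univ_of_forall fun u => by_contra fun hu => ?_⟩
  obtain ⟨p⟩ := hconn.preconnected t u
  obtain ⟨d, -, hfst, hsnd⟩ := p.exists_boundary_dart _ mem_descendants_self hu
  exact (ht d.snd).not_gt (hr.mem_laterNeighbors_of_adj hfst hsnd d.adj).1

end IsPerfectElimination

end EliminationTree

/-! ### Splitting lists at a set -/

/-- Some entry of the list `l` lies in `S`. -/
def Meets {α : Type*} (l : List α) (S : Set α) : Prop :=
  ∃ z ∈ l, z ∈ S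

/-- The list `l` has entries both inside and outside `S`. -/
def Crosses {α : Type*} (l : List α) (S : Set α) : Prop :=
  Meets l S ∧ Meets l Sᶜ

/-- The first or the last entry of the list `l` lies in `S`. -/
def HasEndIn {α : Type*} (l : List α) (S : Set α) : Prop :=
  ∃ z ∈ S, z ∈ l.head? ∨ z ∈ l.getLast?

section Lists

variable {α : Type*} {l : List α} {S T : Set α}

theorem Meets.mono (hl : Meets l S) (hST : S ⊆ T) : Meets l T :=
  hl.imp fun _ hz => ⟨hz.1, hST hz.2⟩

theorem HasEndIn.mono (hl : HasEndIn l S) (hST : S ⊆ T) : HasEndIn l T :=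
  hl.imp fun _ hz => ⟨hST hz.1, hz.2⟩

theorem HasEndIn.reverse (hl : HasEndIn l S) : HasEndIn l.reverse S := by
  obtain ⟨z, hz, hend⟩ := hl
  exact ⟨z, hz, by simpa using hend.symm⟩

theorem Meets.crosses_of_not_hasEndIn (hl : Meets l S) (hend : ¬ HasEndIn l S) : Crosses l S := by
  have hne : l ≠ [] := List.ne_nil_of_mem hl.choose_spec.1
  exact ⟨hl, l.head hne, List.head_mem _, fun hhead =>
    hend ⟨_, hhead, .inl (List.head_mem_head? _)⟩⟩

theorem exists_eq_append_cons_of_meets (hl : Meets l S) :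
    ∃ l₁ z l₂, l = l₁ ++ z :: l₂ ∧ z ∈ S ∧ ∀ w ∈ l₁, w ∉ S := by
  classical
  obtain ⟨z, hz⟩ : ∃ z, l.find? (· ∈ S) = some z :=
    Option.isSome_iff_exists.1 (List.find?_isSome.2 (by simpa [Meets] using hl))
  obtain ⟨hzS, l₁, l₂, rfl, hl₁⟩ := List.find?_eq_some_iff_append.1 hz
  exact ⟨l₁, z, l₂, rfl, by simpa using hzS, by simpa using hl₁⟩

theorem exists_eq_append_cons_of_meets_right (hl : Meets l S) :
    ∃ l₁ z l₂, l = l₁ ++ z :: l₂ ∧ z ∈ S ∧ ∀ w ∈ l₂, w ∉ S := by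
  obtain ⟨l₁, z, l₂, hl', hz, hl₁⟩ :=
    exists_eq_append_cons_of_meets (l := l.reverse) (S := S) (by simpa [Meets] using hl)
  refine ⟨l₂.reverse, z, l₁.reverse, ?_, hz, by simpa using hl₁⟩
  simpa using congrArg List.reverse hl'

theorem Crosses.exists_pair_infix (hl : Crosses l S) :
    ∃ w ∈ S, ∃ u ∉ S, [w, u] <:+: l ∨ [u, w] <:+: l := by
  induction l with
  | nil => simp [Crosses, Meets] at hl
  | cons a l ih =>
    cases l with
    | nil => simp [Crosses, Meets] at hl
    | cons b l =>
      have hpair : [a, b] <:+: a :: b :: l := ⟨[], l, rfl⟩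
      by_cases ha : a ∈ S <;> by_cases hb : b ∈ S
      · obtain ⟨w, hw, u, hu, h⟩ := ih (by simp_all [Crosses, Meets])
        exact ⟨w, hw, u, hu, h.imp List.infix_cons List.infix_cons⟩
      · exact ⟨a, ha, b, hb, .inl hpair⟩
      · exact ⟨b, hb, a, ha, .inr hpair⟩
      · obtain ⟨w, hw, u, hu, h⟩ := ih (by simp_all [Crosses, Meets])
        exact ⟨w, hw, u, hu, h.imp List.infix_cons List.infix_cons⟩

theorem exists_excursion (hl : Meets l S) (hend : ¬ HasEndIn l S) :
    ∃ l₁ u s v l₂, l = (l₁ ++ [u]) ++ s ++ v :: l₂ ∧ s ≠ [] ∧ (∀ z ∈ s, z ∈ S) ∧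
      u ∉ S ∧ v ∉ S := by
  obtain ⟨p, z, q, rfl, hz, hp⟩ := exists_eq_append_cons_of_meets hl
  obtain ⟨l₁, u, rfl⟩ : ∃ l₁ u, p = l₁ ++ [u] := by
    simp only [← List.concat_eq_append]
    refine (List.eq_nil_or_concat p).resolve_left ?_
    rintro rfl
    exact hend ⟨z, hz, by simp⟩
  have hq : Meets (z :: q) Sᶜ :=
    ⟨(z :: q).getLast (by simp), List.getLast_mem _, fun hlast =>
      hend ⟨_, hlast, .inr (by simp [List.getLast?_eq_some_getLast])⟩⟩
  obtain ⟨s, v, l₂, hzq, hv, hs⟩ := exists_eq_append_cons_of_meets hq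
  refine ⟨l₁, u, s, v, l₂, by rw [hzq, List.append_assoc _ s], ?_,
    fun w hw => not_not.1 (hs w hw), hp u (by simp), hv⟩
  rintro rfl
  obtain ⟨rfl, -⟩ : z = v ∧ q = l₂ := by simpa using hzq
  exact hv hz

theorem exists_forall_length_le [Finite α] {β : Type*} {P : β → Prop} (f : β → List α)
    (hnodup : ∀ x, P x → (f x).Nodup) (hP : ∃ x, P x) :
    ∃ x, P x ∧ ∀ y, P y → (f y).length ≤ (f x).length := by
  have := Fintype.ofFinite α
  let lengths : Set ℕ := {n | ∃ x, P x ∧ (f x).length = n}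
  have hbdd : BddAbove lengths := by
    refine ⟨Fintype.card α, ?_⟩
    rintro _ ⟨x, hx, rfl⟩
    exact (hnodup x hx).length_le_card
  have hne : lengths.Nonempty := hP.imp' (fun x => (f x).length) fun x hx => ⟨x, hx, rfl⟩
  obtain ⟨x, hx, hlen⟩ := Nat.sSup_mem hne hbdd
  exact ⟨x, hx, fun y hy => hlen ▸ le_csSup hbdd ⟨y, hy, rfl⟩⟩

end Lists

/-! ### Longest paths as lists of vertices -/

/-- The list `l` of vertices, which may be empty, traces a path of `G`. Unlike walks, such lists
carry no endpoints in their type, so paths can be cut and pasted as lists. -/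
structure IsPathList {V : Type*} (G : SimpleGraph V) (l : List V) : Prop where
  isChain : l.IsChain G.Adj
  nodup : l.Nodup

/-- The list `l` of vertices traces a path of `G` of maximum length. -/
structure IsLongestPathList {V : Type*} (G : SimpleGraph V) (l : List V) : Prop
    extends IsPathList G l where
  length_le : ∀ m, IsPathList G m → m.length ≤ l.length

theorem IsLongestPath.isLongestPathList_support {V : Type} {G : SimpleGraph V} {a b : V}
    {p : G.Walk a b} (hp : IsLongestPath G p) : IsLongestPathList G p.support := by
  refine ⟨⟨p.isChain_adj_support, hp.1.support_nodup⟩, fun m hm => ?_⟩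
  rcases eq_or_ne m [] with rfl | hne
  · simp
  let q := Walk.ofSupport m hne hm.isChain
  have hq : q.IsPath := (Walk.isPath_def _).2 (by simpa [q] using hm.nodup)
  have hle : q.length ≤ p.length := hp.2 _ _ q hq
  simp only [q, Walk.length_ofSupport] at hle
  rw [Walk.length_support]
  omega

section PathLists

variable {V : Type*} {G : SimpleGraph V} {a b u w x y z : V} {A B C D l l₁ l₂ m q s : List V}

theorem IsPathList.of_infix (hl : IsPathList G l) (h : m <:+: l) : IsPathList G m :=
  ⟨hl.isChain.infix h, hl.nodup.sublist h.sublist⟩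

theorem isPathList_reverse : IsPathList G l.reverse ↔ IsPathList G l := by
  have hsymm : (fun a b => G.Adj b a) = G.Adj := by
    ext a b
    exact G.adj_comm b a
  have hchain : l.reverse.IsChain G.Adj ↔ l.IsChain G.Adj := by rw [List.isChain_reverse, hsymm]
  exact ⟨fun h => ⟨hchain.1 h.isChain, List.nodup_reverse.1 h.nodup⟩,
    fun h => ⟨hchain.2 h.isChain, List.nodup_reverse.2 h.nodup⟩⟩

theorem IsLongestPathList.reverse (hl : IsLongestPathList G l) : IsLongestPathList G l.reverse :=
  ⟨isPathList_reverse.2 hl.toIsPathList, by simpa using hl.length_le⟩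

theorem IsPathList.append (h₁ : IsPathList G l₁) (h₂ : IsPathList G l₂)
    (hadj : ∀ x ∈ l₁.getLast?, ∀ y ∈ l₂.head?, G.Adj x y) (hdisj : l₁.Disjoint l₂) :
    IsPathList G (l₁ ++ l₂) :=
  ⟨List.isChain_append.2 ⟨h₁.isChain, h₂.isChain, hadj⟩, h₁.nodup.append h₂.nodup hdisj⟩

theorem IsLongestPathList.length_le_of_detour (h : IsLongestPathList G (l₁ ++ s ++ l₂))
    (hm : IsPathList G m) (h₁ : ∀ x ∈ l₁.getLast?, ∀ y ∈ m.head?, G.Adj x y)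
    (h₂ : ∀ x ∈ m.getLast?, ∀ y ∈ l₂.head?, G.Adj x y) (hdisj₁ : l₁.Disjoint m)
    (hdisj₂ : m.Disjoint l₂) : m.length ≤ s.length := by
  rcases eq_or_ne m [] with rfl | hne
  · simp
  have hnodup := h.nodup
  rw [List.append_assoc, List.nodup_append'] at hnodup
  have hdisj : l₁.Disjoint l₂ :=
    fun _ hz₁ hz₂ => hnodup.2.2 hz₁ (List.mem_append_right s hz₂)
  have hpath : IsPathList G (l₁ ++ (m ++ l₂)) := by
    refine (h.of_infix ⟨[], s ++ l₂, by simp⟩).append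
      (hm.append (h.of_infix ⟨l₁ ++ s, [], by simp⟩) h₂ hdisj₂) ?_
      (List.disjoint_append_right.2 ⟨hdisj₁, hdisj⟩)
    simpa [List.head?_append_of_ne_nil _ hne] using h₁
  have hlen := h.length_le _ hpath
  simp only [List.length_append] at hlen
  omega

theorem IsLongestPathList.mem_of_adj_of_adj (hl : IsLongestPathList G l) (h : [w, u] <:+: l)
    (hwz : G.Adj w z) (hzu : G.Adj z u) : z ∈ l := by
  obtain ⟨l₁, l₂, rfl⟩ := h
  by_contra hz
  have hsplit : IsLongestPathList G ((l₁ ++ [w]) ++ [] ++ (u :: l₂)) := by simpa using hl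
  simp only [List.mem_append, List.mem_cons, List.not_mem_nil, or_false, not_or] at hz
  have hlen := hsplit.length_le_of_detour (m := [z]) ⟨.singleton z, List.nodup_singleton z⟩
    (by simpa using hwz) (by simpa using hzu) (by simp [List.Disjoint]; grind)
    (by simp [List.Disjoint]; grind)
  simp at hlen

theorem IsPathList.exists_cons_of_eq_or_adj (hm : IsPathList G (a :: m)) (hab : a = b ∨ G.Adj a b)
    (hb : b ∉ m) : ∃ n, (∀ z ∈ n, z = a) ∧ IsPathList G (b :: (n ++ m)) := by
  by_cases hne : a = b
  · subst hne
    exact ⟨[], by simp, hm⟩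
  · have hadj := (hab.resolve_left hne).symm
    refine ⟨[a], by simp, List.isChain_cons_cons.2 ⟨hadj, hm.isChain⟩, ?_⟩
    exact List.nodup_cons.2 ⟨by simp [Ne.symm hne, hb], hm.nodup⟩

theorem IsPathList.exists_append_singleton_of_eq_or_adj (hm : IsPathList G (m ++ [a]))
    (hab : a = b ∨ G.Adj a b) (hb : b ∉ m) :
    ∃ n, (∀ z ∈ n, z = a) ∧ IsPathList G (m ++ n ++ [b]) := by
  obtain ⟨n, hn, hpath⟩ := IsPathList.exists_cons_of_eq_or_adj (m := m.reverse)
    (by simpa using isPathList_reverse.2 hm) hab (by simpa using hb)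
  exact ⟨n.reverse, by simpa using hn, by simpa using isPathList_reverse.2 hpath⟩

theorem exists_isLongestPathList [Finite V] : ∃ l, IsLongestPathList G l := by
  obtain ⟨l, hl, hmax⟩ := exists_forall_length_le (P := IsPathList G) id (fun _ h => h.nodup)
    ⟨[], .nil, List.nodup_nil⟩
  exact ⟨l, hl, hmax⟩

theorem IsLongestPathList.exists_mem [Nonempty V] (hl : IsLongestPathList G l) : ∃ z, z ∈ l := by
  obtain ⟨v⟩ := ‹Nonempty V›
  have hlen := hl.length_le [v] ⟨.singleton v, List.nodup_singleton v⟩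
  exact List.exists_mem_of_length_pos hlen

theorem exists_isPathList_between (hG : G.Connected) {S T : Set V} (hS : S.Nonempty)
    (hT : T.Nonempty) (hdisj : Disjoint S T) :
    ∃ x ∈ S, ∃ y ∈ T, ∃ q, IsPathList G (x :: (q ++ [y])) ∧ ∀ z ∈ q, z ∉ S ∧ z ∉ T := by
  obtain ⟨x₀, hx₀⟩ := hS
  obtain ⟨y₀, hy₀⟩ := hT
  obtain ⟨p, hp⟩ := (hG.preconnected x₀ y₀).exists_isPath
  have hpath : IsPathList G p.support := ⟨p.isChain_adj_support, hp.support_nodup⟩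
  obtain ⟨p₁, y, p₂, hsplit, hy, hp₁⟩ :=
    exists_eq_append_cons_of_meets (S := T) ⟨y₀, p.end_mem_support, hy₀⟩
  have hhead : p.support.head? = some x₀ := by rw [← p.cons_tail_support, List.head?_cons]
  rw [hsplit] at hhead
  have hx₀p₁ : x₀ ∈ p₁ := by
    cases p₁ with
    | nil =>
      obtain rfl : y = x₀ := by simpa using hhead
      exact absurd hy (Set.disjoint_left.1 hdisj hx₀)
    | cons x p₁ =>
      obtain rfl : x = x₀ := by simpa using hhead
      exact List.mem_cons_self
  obtain ⟨q₀, x, q, rfl, hx, hq⟩ := exists_eq_append_cons_of_meets_right ⟨x₀, hx₀p₁, hx₀⟩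
  exact ⟨x, hx, y, hy, q, hpath.of_infix ⟨q₀, p₂, by simp [hsplit]⟩,
    fun z hz => ⟨hq z hz, hp₁ z (by simp [hz])⟩⟩

theorem IsLongestPathList.length_lt_of_link (hP : IsLongestPathList G (A ++ x :: B))
    (hQ : IsPathList G (C ++ y :: D)) (hdisj : (A ++ x :: B).Disjoint (C ++ y :: D))
    (hlink : IsPathList G (x :: (q ++ [y]))) (hqP : q.Disjoint (A ++ x :: B))
    (hqQ : q.Disjoint (C ++ y :: D)) : D.length < B.length := by
  have hyD : IsPathList G (y :: D) := hQ.of_infix ⟨C, [], by simp⟩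
  have hyD_sub : y :: D ⊆ C ++ y :: D := List.subset_append_right ..
  have hxA_sub : A ++ [x] ⊆ A ++ x :: B := by grind
  have htail : IsPathList G (q ++ y :: D) := by
    refine (hlink.of_infix ⟨[x], [y], by simp⟩).append hyD ?_ fun _ hz hz' => hqQ hz (hyD_sub hz')
    simpa using (List.isChain_append.1 hlink.isChain.of_cons).2.2
  have hfirst : ∀ z ∈ (q ++ y :: D).head?, G.Adj x z := by
    have := (List.isChain_cons.1 hlink.isChain).1
    cases q <;> simpa using this
  have hP' : IsLongestPathList G ((A ++ [x]) ++ B ++ []) := by simpa using hP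
  have hlen := hP'.length_le_of_detour htail (by simpa using hfirst) (by simp)
    (List.disjoint_append_right.2 ⟨fun _ hz hz' => hqP hz' (hxA_sub hz),
      fun _ hz hz' => hdisj (hxA_sub hz) (hyD_sub hz')⟩) (List.disjoint_nil_right _)
  simp only [List.length_append, List.length_cons] at hlen
  omega

/-- If `P = A x B` and `Q = C y D` were disjoint, a link from `x` to `y` would make both `A x … y D`
and `C y … x B` paths, so that `D` is shorter than `B` and `B` shorter than `D`. -/
theorem IsLongestPathList.exists_mem_mem (hG : G.Connected) (hl : IsLongestPathList G l)
    (hm : IsLongestPathList G m) : ∃ z ∈ l, z ∈ m := by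
  have := hG.nonempty
  by_contra! hdisj
  obtain ⟨x, hx, y, hy, q, hlink, hq⟩ := exists_isPathList_between hG (S := {z | z ∈ l})
    (T := {z | z ∈ m}) hl.exists_mem hm.exists_mem
    (Set.disjoint_left.2 hdisj)
  obtain ⟨A, B, rfl⟩ := List.append_of_mem hx
  obtain ⟨C, D, rfl⟩ := List.append_of_mem hy
  have hDB : D.length < B.length := hl.length_lt_of_link hm.toIsPathList hdisj hlink
    (fun z hz => (hq z hz).1) (fun z hz => (hq z hz).2)
  have hBD : B.length < D.length := by
    refine hm.length_lt_of_link hl.toIsPathList (fun z hzm hzl => hdisj z hzl hzm)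
      (q := q.reverse) (by simpa using isPathList_reverse.2 hlink) ?_ ?_
    · exact fun z hz => (hq z (List.mem_reverse.1 hz)).2
    · exact fun z hz => (hq z (List.mem_reverse.1 hz)).1
  omega

end PathLists

/-! ### Hubs -/

/-- Every path that leaves `D` can be rerouted through `b`: the vertex `b` lies outside `D` and is
equal or adjacent to each vertex on the boundary of `D`. -/
structure IsHub {V : Type*} (G : SimpleGraph V) (b : V) (D : Set V) : Prop where
  notMem : b ∉ D
  eq_or_adj : ∀ w ∈ D, ∀ u ∉ D, G.Adj w u → u = b ∨ G.Adj u b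

section Hubs

variable {V : Type*} {G : SimpleGraph V} {a a' b b' : V} {l m : List V} {D : Set V}

theorem IsHub.eq_or_adj_of_isPathList_cons (hhub : IsHub G b D) (hm : IsPathList G (a :: m))
    (ha : a ∉ D) (hne : m ≠ []) (hmD : ∀ z ∈ m, z ∈ D) : a = b ∨ G.Adj a b := by
  obtain ⟨w, m, rfl⟩ := List.exists_cons_of_ne_nil hne
  exact hhub.eq_or_adj w (hmD w (by simp)) a ha (List.isChain_cons_cons.1 hm.isChain).1.symm

theorem IsHub.eq_or_adj_of_isPathList_append (hhub : IsHub G b D) (hm : IsPathList G (m ++ [a]))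
    (ha : a ∉ D) (hne : m ≠ []) (hmD : ∀ z ∈ m, z ∈ D) : a = b ∨ G.Adj a b :=
  hhub.eq_or_adj_of_isPathList_cons (m := m.reverse) (by simpa using isPathList_reverse.2 hm) ha
    (by simpa using hne) (by simpa using hmD)

theorem IsLongestPathList.exists_lt_length_of_hasEndIn (hl : IsLongestPathList G l)
    (hhub : IsHub G b D) (hend : HasEndIn l D) (hout : Meets l Dᶜ) (hm : IsPathList G (b :: m))
    (hdisj : l.Disjoint (b :: m)) :
    ∃ u s, IsPathList G (u :: s) ∧ (∀ z ∈ s, z ∈ D) ∧ (u = b ∨ G.Adj u b) ∧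
      m.length < s.length := by
  wlog hhead : ∃ z ∈ D, z ∈ l.head? generalizing l
  · refine this hl.reverse hend.reverse (by simpa [Meets] using hout)
      (by simpa [List.Disjoint] using hdisj) ?_
    obtain ⟨z, hz, hz' | hz'⟩ := hend
    · exact absurd ⟨z, hz, hz'⟩ hhead
    · exact ⟨z, hz, by simpa using hz'⟩
  obtain ⟨s, u, l₂, rfl, hu, hs⟩ := exists_eq_append_cons_of_meets hout
  have hs : ∀ z ∈ s, z ∈ D := fun z hz => not_not.1 (hs z hz)
  have hne : s ≠ [] := by
    rintro rfl
    obtain ⟨z, hz, hzu⟩ := hhead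
    obtain rfl : u = z := by simpa using hzu
    exact hu hz
  have hsu : IsPathList G (s ++ [u]) := hl.of_infix ⟨[], l₂, by simp⟩
  have hub := hhub.eq_or_adj_of_isPathList_append hsu hu hne hs
  have hadj : G.Adj b u := (hub.resolve_left fun h => hdisj (a := u) (by simp) (by simp [h])).symm
  have hlen := IsLongestPathList.length_le_of_detour (l₁ := []) (s := s) (l₂ := u :: l₂)
    (by simpa using hl) (isPathList_reverse.2 hm) (by simp) (by simpa using hadj) (by simp)
    (fun z hz hz' => hdisj (List.mem_append_right s hz') (List.mem_reverse.1 hz))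
  exact ⟨u, s.reverse, by simpa using isPathList_reverse.2 hsu, by simpa using hs, hub,
    by simpa using hlen⟩

/-- The witness comes from a path `a :: m`, attached to `b`, with `m` inside some `D i` and as long
as possible: a longest path ending in `D j` and avoiding `D i` could trade its end for `m`. -/
theorem exists_forall_hasEndIn_meets [Finite V] {ι : Type*} [Nonempty ι] {D : ι → Set V}
    (hhub : ∀ i, IsHub G b (D i)) :
    ∃ a i, ∀ l, IsLongestPathList G l → b ∉ l → a ∉ l →
      ∀ j, HasEndIn l (D j) → Meets l (D j)ᶜ → Meets l (D i) := by
  obtain ⟨i₀⟩ := ‹Nonempty ι›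
  obtain ⟨⟨i, a, m⟩, ⟨ham, hmD, hab⟩, hmax⟩ := exists_forall_length_le
    (P := fun (⟨i, a, m⟩ : ι × V × List V) => IsPathList G (a :: m) ∧ (∀ z ∈ m, z ∈ D i) ∧
      (a = b ∨ G.Adj a b)) (fun x => x.2.2)
    (fun x hx => hx.1.nodup.of_cons)
    ⟨(i₀, b, []), ⟨.singleton b, List.nodup_singleton b⟩, by simp, .inl rfl⟩
  refine ⟨a, i, fun l hl hbl hal j hend hout => by_contra fun hmeets => ?_⟩
  obtain ⟨n, hn, hnm⟩ := ham.exists_cons_of_eq_or_adj hab fun hb => (hhub i).notMem (hmD b hb)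
  have hdisj : l.Disjoint (b :: (n ++ m)) := by
    intro z hzl hz
    rw [List.mem_cons, List.mem_append] at hz
    rcases hz with rfl | hz | hz
    · exact hbl hzl
    · exact hal (hn z hz ▸ hzl)
    · exact hmeets ⟨z, hzl, hmD z hz⟩
  obtain ⟨u, s, hus, hsD, hub, hlt⟩ :=
    hl.exists_lt_length_of_hasEndIn (hhub j) hend hout hnm hdisj
  have hle : s.length ≤ m.length := hmax (j, u, s) ⟨hus, hsD, hub⟩
  rw [List.length_append] at hlt
  omega

theorem IsPathList.exists_extend_both_ends (hm : IsPathList G (a :: (m ++ [a'])))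
    (hab : a = b ∨ G.Adj a b) (hab' : a' = b' ∨ G.Adj a' b') (hb : b ∉ m ++ [a'])
    (hb' : b' ∉ a :: m) (hbb' : b ≠ b') :
    ∃ n, IsPathList G (b :: (n ++ [b'])) ∧ m.length ≤ n.length ∧
      ∀ z ∈ n, z = a ∨ z ∈ m ∨ z = a' := by
  obtain ⟨n₁, hn₁, hfront⟩ := hm.exists_cons_of_eq_or_adj hab hb
  obtain ⟨n₂, hn₂, hback⟩ := IsPathList.exists_append_singleton_of_eq_or_adj
    (m := b :: (n₁ ++ m)) (by simpa using hfront) hab' (by grind)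
  refine ⟨n₁ ++ m ++ n₂, by simpa using hback, by simp; omega, fun z hz => ?_⟩
  simp only [List.mem_append] at hz
  rcases hz with (hz | hz) | hz
  · exact .inl (hn₁ z hz)
  · exact .inr (.inl hz)
  · exact .inr (.inr (hn₂ z hz))

/-- Joining `b` to `a` and `b'` to `a'` fails when `a = b'` or `a' = b`; then the crosswise
connections work. -/
theorem IsPathList.exists_extend_between (hm : IsPathList G (a :: (m ++ [a'])))
    (hab : a = b ∨ G.Adj a b) (hab' : a = b' ∨ G.Adj a b') (ha₂b : a' = b ∨ G.Adj a' b)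
    (ha₂b' : a' = b' ∨ G.Adj a' b') (hb : b ∉ m) (hb' : b' ∉ m) (hbb' : b ≠ b') :
    ∃ n, IsPathList G n ∧ m.length + 2 ≤ n.length ∧
      (∀ z ∈ n, z ∈ m ∨ z ∈ [a, a', b, b']) ∧
      (∀ z ∈ n.head?, z = b ∨ z = b') ∧ ∀ z ∈ n.getLast?, z = b ∨ z = b' := by
  have haa' : a ≠ a' := by have := hm.nodup; grind
  by_cases hcross : a = b' ∨ a' = b
  · obtain ⟨n, hn, hlen, hsub⟩ := hm.exists_extend_both_ends hab' ha₂b (by grind) (by grind)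
      hbb'.symm
    exact ⟨_, hn, by simpa using hlen, by grind, by simp, by grind⟩
  · obtain ⟨n, hn, hlen, hsub⟩ := hm.exists_extend_both_ends hab ha₂b' (by grind) (by grind) hbb'
    exact ⟨_, hn, by simpa using hlen, by grind, by simp, by grind⟩

theorem IsLongestPathList.exists_length_le_of_not_hasEndIn (hl : IsLongestPathList G l)
    (hhub : IsHub G b D) (hhub' : IsHub G b' D) (hmeets : Meets l D) (hend : ¬ HasEndIn l D)
    (hbl : b ∉ l) (hbl' : b' ∉ l) (hm : IsPathList G m) (hdisj : l.Disjoint m)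
    (hhead : ∀ z ∈ m.head?, z = b ∨ z = b') (hlast : ∀ z ∈ m.getLast?, z = b ∨ z = b') :
    ∃ u s v, IsPathList G (u :: (s ++ [v])) ∧ s ≠ [] ∧ (∀ z ∈ s, z ∈ D) ∧ u ∉ D ∧ v ∉ D ∧
      m.length ≤ s.length := by
  obtain ⟨l₁, u, s, v, l₂, rfl, hne, hs, hu, hv⟩ := exists_excursion hmeets hend
  have husv : IsPathList G (u :: (s ++ [v])) := hl.of_infix ⟨l₁, l₂, by simp⟩
  have hus : IsPathList G (u :: s) := husv.of_infix ⟨[], [v], by simp⟩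
  have hsv : IsPathList G (s ++ [v]) := husv.of_infix ⟨[u], [], by simp⟩
  have adj_of_hub : ∀ c, IsHub G c D → c ∉ l₁ ++ [u] ++ s ++ v :: l₂ → G.Adj u c ∧ G.Adj c v := by
    intro c hc hcl
    have huc := (hc.eq_or_adj_of_isPathList_cons hus hu hne hs).resolve_left
      (by rintro rfl; simp at hcl)
    have hvc := (hc.eq_or_adj_of_isPathList_append hsv hv hne hs).resolve_left
      (by rintro rfl; simp at hcl)
    exact ⟨huc, hvc.symm⟩
  have hadj : ∀ z, z = b ∨ z = b' → G.Adj u z ∧ G.Adj z v := by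
    rintro z (rfl | rfl)
    exacts [adj_of_hub _ hhub hbl, adj_of_hub _ hhub' hbl']
  refine ⟨u, s, v, husv, hne, hs, hu, hv, hl.length_le_of_detour hm ?_ ?_ ?_ ?_⟩
  · simpa using fun z hz => (hadj z (hhead z hz)).1
  · simpa using fun z hz => (hadj z (hlast z hz)).2
  · exact fun z hz hz' => hdisj (by grind) hz'
  · exact fun z hz hz' => hdisj (by grind) hz

/-- As in `exists_forall_hasEndIn_meets`, now maximizing over paths whose interior lies in some
`D i`. -/
theorem exists_forall_not_hasEndIn_meets [Finite V] {ι : Type*} [Nonempty ι] {D : ι → Set V}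
    (hhub : ∀ i, IsHub G b (D i)) (hhub' : ∀ i, IsHub G b' (D i)) (hbb' : b ≠ b') :
    ∃ a a' i, ∀ l, IsLongestPathList G l → b ∉ l → b' ∉ l → a ∉ l → a' ∉ l →
      ∀ j, Meets l (D j) → ¬ HasEndIn l (D j) → Meets l (D i) := by
  let IsCandidate : ι × V × List V × V → Prop := fun ⟨i, a, m, a'⟩ =>
    IsPathList G (a :: (m ++ [a'])) ∧ m ≠ [] ∧ (∀ z ∈ m, z ∈ D i) ∧ a ∉ D i ∧ a' ∉ D i
  by_cases hex : ∃ x, IsCandidate x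
  · obtain ⟨⟨i, a, m, a'⟩, ⟨hm, hne, hmD, ha, ha'⟩, hmax⟩ := exists_forall_length_le
      (fun x : ι × V × List V × V => x.2.2.1) (fun x hx => (hx.1.of_infix ⟨[x.2.1], _, rfl⟩).nodup)
      hex
    have ham : IsPathList G (a :: m) := hm.of_infix ⟨[], [a'], by simp⟩
    have hma' : IsPathList G (m ++ [a']) := hm.of_infix ⟨[a], [], by simp⟩
    obtain ⟨n, hn, hlen, hsub, hhead, hlast⟩ := hm.exists_extend_between
      ((hhub i).eq_or_adj_of_isPathList_cons ham ha hne hmD)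
      ((hhub' i).eq_or_adj_of_isPathList_cons ham ha hne hmD)
      ((hhub i).eq_or_adj_of_isPathList_append hma' ha' hne hmD)
      ((hhub' i).eq_or_adj_of_isPathList_append hma' ha' hne hmD)
      (fun hb => (hhub i).notMem (hmD b hb)) (fun hb' => (hhub' i).notMem (hmD b' hb')) hbb'
    refine ⟨a, a', i, fun l hl hbl hbl' hal hal' j hmeets hend => by_contra fun hi => ?_⟩
    have hdisj : l.Disjoint n := by
      intro z hzl hzn
      rcases hsub z hzn with hz | hz
      · exact hi ⟨z, hzl, hmD z hz⟩
      · grind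
    obtain ⟨u, s, v, husv, hs, hsD, hu, hv, hle⟩ := hl.exists_length_le_of_not_hasEndIn
      (hhub j) (hhub' j) hmeets hend hbl hbl' hn hdisj hhead hlast
    have hsm : s.length ≤ m.length := hmax (j, u, s, v) ⟨husv, hs, hsD, hu, hv⟩
    omega
  · obtain ⟨i⟩ := ‹Nonempty ι›
    refine ⟨b, b, i, fun l hl hbl hbl' _ _ j hmeets hend => absurd ?_ hex⟩
    obtain ⟨u, s, v, husv, hs, hsD, hu, hv, -⟩ := hl.exists_length_le_of_not_hasEndIn
      (hhub j) (hhub' j) hmeets hend hbl hbl' ⟨.nil, List.nodup_nil⟩ (List.disjoint_nil_right l)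
      (by simp) (by simp)
    exact ⟨(j, u, s, v), husv, hs, hsD, hu, hv⟩

end Hubs

/-! ### Longest paths crossing a subtree of the elimination tree -/

theorem exists_ne_forall_le_of_total {α β : Type*} [Preorder β] {s : Set α} (hs : s.Finite)
    (hs' : s.Nontrivial) (f : α → β) (htotal : ∀ x ∈ s, ∀ y ∈ s, f x ≤ f y ∨ f y ≤ f x) :
    ∃ b ∈ s, ∃ b' ∈ s, b ≠ b' ∧ ∀ u ∈ s, u ≠ b → f u ≤ f b ∧ f u ≤ f b' := by
  have exists_max : ∀ t ⊆ s, t.Nonempty → ∃ b ∈ t, ∀ u ∈ t, f u ≤ f b := by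
    intro t hts ht
    obtain ⟨b, hb⟩ := (hs.subset hts).exists_maximalFor f t ht
    exact ⟨b, hb.prop, fun u hu => (htotal u (hts hu) b (hts hb.prop)).elim id fun hbu =>
      hb.2 hu hbu⟩
  obtain ⟨b, hb, hmax⟩ := exists_max s subset_rfl hs'.nonempty
  obtain ⟨b', hb', hmax'⟩ := exists_max (s \ {b}) Set.sdiff_subset
    (let ⟨y, hy, hne⟩ := hs'.exists_ne b; ⟨y, hy, hne⟩)
  exact ⟨b, hb, b', hb'.1, Ne.symm hb'.2, fun u hu hub => ⟨hmax u hu, hmax' u ⟨hu, hub⟩⟩⟩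

/-- The vertices below `x` whose subtree has more than half the size of the subtree of `x`; they
form a path of the elimination tree that starts at `x`. -/
def heavyPath {V : Type*} (G : SimpleGraph V) (r : V → ℕ) (x : V) : Set V :=
  {y ∈ descendants G r x | (descendants G r x).ncard < 2 * (descendants G r y).ncard}

/-- The vertices on the heavy path of `x` that have `u` as a later neighbour. -/
def heavyReach {V : Type*} (G : SimpleGraph V) (r : V → ℕ) (x u : V) : Set V :=
  {y ∈ heavyPath G r x | u ∈ laterNeighbors G r y}

/-- The subtree of `c` is a part of the subtree of `x` of at most half its size, and it has the hubs
`b` and `b'`. -/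
structure IsBranch {V : Type*} (G : SimpleGraph V) (r : V → ℕ) (x b b' c : V) : Prop where
  subset : descendants G r c ⊆ descendants G r x
  two_mul_ncard_le : 2 * (descendants G r c).ncard ≤ (descendants G r x).ncard
  isHub : IsHub G b (descendants G r c)
  isHub' : IsHub G b' (descendants G r c)

namespace IsPerfectElimination

variable {V : Type*} {G : SimpleGraph V} {r : V → ℕ} {b b' c u v w x y z : V} {l : List V}
  (hr : IsPerfectElimination G r)
include hr

theorem isHub_descendants (h : IsParent G r c y) (hb : b ∈ laterNeighbors G r y) :
    IsHub G b (descendants G r c) where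
  notMem hbc := Set.disjoint_left.1 disjoint_laterNeighbors_descendants hb
    (h.descendants_ssubset.le hbc)
  eq_or_adj _ hw _ hu hadj := or_iff_not_imp_left.2 fun hub =>
    hr.isClique_bag y (hr.laterNeighbors_subset_bag h (hr.mem_laterNeighbors_of_adj hw hu hadj))
      (.inr hb) hub

theorem exists_adj_laterNeighbors_of_crosses (hl : l.IsChain G.Adj)
    (hcross : Crosses l (descendants G r x)) :
    ∃ w ∈ descendants G r x, ∃ u ∈ laterNeighbors G r x, w ∈ l ∧ u ∈ l ∧ G.Adj w u ∧
      ([w, u] <:+: l ∨ [u, w] <:+: l) := by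
  obtain ⟨w, hw, u, hu, hwu⟩ := hcross.exists_pair_infix
  have hadj : G.Adj w u := hwu.elim (fun h => by simpa using hl.infix h)
    fun h => by simpa [G.adj_comm] using hl.infix h
  have hmem : w ∈ l ∧ u ∈ l := by
    rcases hwu with h | h <;> exact ⟨h.subset (by simp), h.subset (by simp)⟩
  exact ⟨w, hw, u, hr.mem_laterNeighbors_of_adj hw hu hadj, hmem.1, hmem.2, hadj, hwu⟩

theorem subset_descendants_of_avoids_laterNeighbors {m : List V} (hm : m.IsChain G.Adj)
    (havoid : ∀ z ∈ m, z ∉ laterNeighbors G r c) (hw : w ∈ m) (hwc : w ∈ descendants G r c) :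
    ∀ z ∈ m, z ∈ descendants G r c := by
  by_contra! hout
  obtain ⟨-, -, u, hu, -, hum, -⟩ :=
    hr.exists_adj_laterNeighbors_of_crosses hm ⟨⟨w, hw, hwc⟩, hout⟩
  exact havoid u hum hu

variable [Finite V]

theorem heavyPath_total (hy : y ∈ heavyPath G r x) (hz : z ∈ heavyPath G r x) :
    y ∈ descendants G r z ∨ z ∈ descendants G r y := by
  have hinter : (descendants G r y ∩ descendants G r z).Nonempty := by
    rw [← Set.ncard_pos]
    have hunion := Set.ncard_le_ncard (Set.union_subset (descendants_subset_of_mem hy.1)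
      (descendants_subset_of_mem hz.1))
    have hadd := Set.ncard_union_add_ncard_inter (descendants G r y) (descendants G r z)
    have hycard := hy.2
    have hzcard := hz.2
    omega
  obtain ⟨w, hwy, hwz⟩ := hinter
  exact hr.descendants_total hwy hwz

theorem heavyReach_total (hu : u ∈ laterNeighbors G r x) (hv : v ∈ laterNeighbors G r x) :
    heavyReach G r x u ⊆ heavyReach G r x v ∨ heavyReach G r x v ⊆ heavyReach G r x u := by
  have upward : ∀ a ∈ laterNeighbors G r x, ∀ y ∈ heavyReach G r x a, ∀ z ∈ heavyPath G r x,
      y ∈ descendants G r z → z ∈ heavyReach G r x a := fun a ha y hy z hz hyz =>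
    ⟨hz, hr.mem_laterNeighbors_of_adj hyz (fun haz => Set.disjoint_left.1
      disjoint_laterNeighbors_descendants ha (descendants_subset_of_mem hz.1 haz)) hy.2.2⟩
  refine or_iff_not_imp_left.2 fun hnot => ?_
  obtain ⟨y, hyu, hyv⟩ := Set.not_subset.1 hnot
  intro z hzv
  rcases hr.heavyPath_total hyu.1 hzv.1 with hyz | hzy
  · exact upward u hu y hyu z hzv.1 hyz
  · exact absurd (upward v hv z hzv y hyu.1 hzy) hyv

theorem exists_isParent_heavyReach (hw : w ∈ descendants G r x) (hwheavy : w ∉ heavyPath G r x)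
    (hu : u ∉ descendants G r x) (hadj : G.Adj w u) :
    ∃ c y, IsParent G r c y ∧ y ∈ heavyReach G r x u ∧ w ∈ descendants G r c ∧
      c ∈ descendants G r x ∧ c ∉ heavyPath G r x := by
  have hxheavy : x ∈ heavyPath G r x := by
    have hpos := (Set.ncard_pos (s := descendants G r x)).2 ⟨x, mem_descendants_self⟩
    exact ⟨mem_descendants_self, by omega⟩
  obtain ⟨c, y, hwc, hcy, hyx, hc, hy⟩ :=
    exists_rel_of_reflTransGen_of_not (P := (· ∈ heavyPath G r x)) hw hwheavy hxheavy
  exact ⟨c, y, hcy, ⟨hy, hr.mem_laterNeighbors_of_adj (.tail hwc hcy)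
    (fun huy => hu (descendants_subset_of_mem hyx huy)) hadj⟩, hwc, .head hcy hyx, hc⟩

theorem exists_isBranch_of_adj (hw : w ∈ descendants G r x) (hwheavy : w ∉ heavyPath G r x)
    (hu : u ∉ descendants G r x) (hadj : G.Adj w u)
    (hb : heavyReach G r x u ⊆ heavyReach G r x b)
    (hb' : heavyReach G r x u ⊆ heavyReach G r x b') :
    ∃ c, IsBranch G r x b b' c ∧ w ∈ descendants G r c := by
  obtain ⟨c, y, hcy, hy, hwc, hcx, hc⟩ := hr.exists_isParent_heavyReach hw hwheavy hu hadj
  exact ⟨c, ⟨descendants_subset_of_mem hcx, not_lt.1 fun hlt => hc ⟨hcx, hlt⟩,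
    hr.isHub_descendants hcy (hb hy).2, hr.isHub_descendants hcy (hb' hy).2⟩, hwc⟩

/-- Among the later neighbours of `x`, take `b` and `b'` with the largest reach along the heavy
path. A longest path cannot leave the subtree of `x` from the heavy path itself, because `b` could
be inserted there. -/
theorem exists_forall_crosses_meets_branch (x : V) :
    ∃ b b', ∀ l, IsLongestPathList G l → Crosses l (descendants G r x) → b ∉ l → b' ∉ l →
      b ≠ b' ∧ ∃ c, IsBranch G r x b b' c ∧ Meets l (descendants G r c) := by
  rcases (laterNeighbors G r x).subsingleton_or_nontrivial with hsub | hnontriv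
  · obtain ⟨a, ha⟩ : ∃ a, ∀ u ∈ laterNeighbors G r x, u = a := by
      rcases hsub.eq_empty_or_singleton with h | ⟨a, h⟩
      exacts [⟨x, by simp [h]⟩, ⟨a, by simp [h]⟩]
    refine ⟨a, a, fun l hl hcross hal => ?_⟩
    obtain ⟨_, -, u, hu, -, hul, -⟩ := hr.exists_adj_laterNeighbors_of_crosses hl.isChain hcross
    exact absurd (ha u hu ▸ hul) hal
  obtain ⟨b, hb, b', -, hne, hmax⟩ := exists_ne_forall_le_of_total (Set.toFinite _) hnontriv
    (heavyReach G r x) fun u hu v hv => hr.heavyReach_total hu hv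
  refine ⟨b, b', fun l hl hcross hbl _ => ⟨hne, ?_⟩⟩
  obtain ⟨w, hw, u, hu, hwl, hul, hwu, hinfix⟩ :=
    hr.exists_adj_laterNeighbors_of_crosses hl.isChain hcross
  have hux : u ∉ descendants G r x :=
    Set.disjoint_left.1 disjoint_laterNeighbors_descendants hu
  have hub : u ≠ b := fun h => hbl (h ▸ hul)
  obtain ⟨hreach, hreach'⟩ := hmax u hu hub
  by_cases hwheavy : w ∈ heavyPath G r x
  · have hwu' : u ∈ laterNeighbors G r w := hr.mem_laterNeighbors_of_adj mem_descendants_self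
      (fun h => hux (descendants_subset_of_mem hw h)) hwu
    have hwb : G.Adj w b := (hreach ⟨hwheavy, hwu'⟩).2.2
    have hbu : G.Adj b u := hr.isClique_laterNeighbors x hb hu hub.symm
    exact absurd (hinfix.elim (hl.mem_of_adj_of_adj · hwb hbu)
      (hl.mem_of_adj_of_adj · hbu.symm hwb.symm)) hbl
  · obtain ⟨c, hc, hwc⟩ := hr.exists_isBranch_of_adj hw hwheavy hux hwu hreach hreach'
    exact ⟨c, hc, w, hwl, hwc⟩

end IsPerfectElimination

/-! ### Transversals of the longest paths -/

section IsBranch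

variable {V : Type*} {G : SimpleGraph V} {r : V → ℕ} {x b b' c : V}

theorem IsBranch.ncard_lt {k : ℕ} (hc : IsBranch G r x b b' c)
    (hx : (descendants G r x).ncard < 2 ^ (k + 1)) : (descendants G r c).ncard < 2 ^ k := by
  have hle := hc.two_mul_ncard_le
  omega

theorem IsBranch.exists_forall_hasEndIn_meets [Finite V] (hc : IsBranch G r x b b' c) :
    ∃ a d, IsBranch G r x b b' d ∧ ∀ l, IsLongestPathList G l → b ∉ l → a ∉ l →
      ∀ c, IsBranch G r x b b' c → HasEndIn l (descendants G r c) →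
        Meets l (descendants G r c)ᶜ → Meets l (descendants G r d) := by
  have : Nonempty {c // IsBranch G r x b b' c} := ⟨c, hc⟩
  obtain ⟨a, ⟨d, hd⟩, hmeets⟩ := _root_.exists_forall_hasEndIn_meets
    (D := fun c : {c // IsBranch G r x b b' c} => descendants G r c) fun c => c.2.isHub
  exact ⟨a, d, hd, fun l hl hb ha c hc => hmeets l hl hb ha ⟨c, hc⟩⟩

theorem IsBranch.exists_forall_not_hasEndIn_meets [Finite V] (hc : IsBranch G r x b b' c)
    (hne : b ≠ b') :
    ∃ a a' d, IsBranch G r x b b' d ∧ ∀ l, IsLongestPathList G l → b ∉ l → b' ∉ l → a ∉ l →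
      a' ∉ l → ∀ c, IsBranch G r x b b' c → Meets l (descendants G r c) →
        ¬ HasEndIn l (descendants G r c) → Meets l (descendants G r d) := by
  have : Nonempty {c // IsBranch G r x b b' c} := ⟨c, hc⟩
  obtain ⟨a, a', ⟨d, hd⟩, hmeets⟩ := _root_.exists_forall_not_hasEndIn_meets
    (D := fun c : {c // IsBranch G r x b b' c} => descendants G r c)
    (fun c => c.2.isHub) (fun c => c.2.isHub') hne
  exact ⟨a, a', d, hd, fun l hl hb hb' ha ha' c hc => hmeets l hl hb hb' ha ha' ⟨c, hc⟩⟩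

end IsBranch

/-- If every longest path meets the clique `B`, take `m` to be a longest final segment of a longest
path after its last vertex `a` in `B`: any other longest path that avoids `a` could be rerouted at
its own last vertex in `B` through `a` and `m`. -/
theorem exists_isChain_avoiding_isClique {V : Type*} {G : SimpleGraph V} [Finite V] {B : Set V}
    (hconn : G.Connected) (hB : G.IsClique B) :
    ∃ (a : V) (m : List V), m.IsChain G.Adj ∧ (∀ z ∈ m, z ∉ B) ∧
      ∀ l, IsLongestPathList G l → a ∉ l → ∃ z ∈ l, z ∈ m := by
  by_cases hall : ∀ l, IsLongestPathList G l → Meets l B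
  swap
  · push Not at hall
    obtain ⟨m, hm, hmB⟩ := hall
    obtain ⟨a⟩ := hconn.nonempty
    exact ⟨a, m, hm.isChain, fun z hz hzB => hmB ⟨z, hz, hzB⟩,
      fun l hl _ => hl.exists_mem_mem hconn hm⟩
  obtain ⟨⟨l₁, a, m⟩, ⟨hl₁, ha, hmB⟩, hmax⟩ := exists_forall_length_le
    (P := fun (⟨l₁, a, m⟩ : List V × V × List V) =>
      IsLongestPathList G (l₁ ++ a :: m) ∧ a ∈ B ∧ ∀ z ∈ m, z ∉ B) (fun x => x.2.2)
    (fun ⟨l₁, a, _⟩ h => (h.1.of_infix ⟨l₁ ++ [a], [], by simp⟩).nodup) (by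
      obtain ⟨l, hl⟩ := exists_isLongestPathList (G := G)
      obtain ⟨l₁, a, m, rfl, h⟩ := exists_eq_append_cons_of_meets_right (hall l hl)
      exact ⟨⟨l₁, a, m⟩, hl, h⟩)
  have ham : IsPathList G (a :: m) := hl₁.of_infix ⟨l₁, [], by simp⟩
  refine ⟨a, m, ham.isChain.of_cons, hmB, fun l hl hal => ?_⟩
  obtain ⟨l₂, a₂, m₂, rfl, ha₂, hm₂B⟩ := exists_eq_append_cons_of_meets_right (hall l hl)
  by_contra! hdisj
  have hle : m₂.length ≤ m.length := hmax ⟨l₂, a₂, m₂⟩ ⟨hl, ha₂, hm₂B⟩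
  have hadj : G.Adj a₂ a := hB ha₂ ha fun h => hal (by simp [h])
  have hl' : IsLongestPathList G ((l₂ ++ [a₂]) ++ m₂ ++ []) := by simpa using hl
  have hlt := hl'.length_le_of_detour ham (by simpa using hadj) (by simp)
    (fun z hz hz' => by grind) (List.disjoint_nil_right _)
  simp only [List.length_cons] at hlt
  omega

namespace IsPerfectElimination

variable {V : Type*} {G : SimpleGraph V} {r : V → ℕ} [Finite V] {x : V} {k : ℕ}
  (hr : IsPerfectElimination G r)
include hr

theorem exists_pair_or_isBranch (x : V) :
    (∃ b b', ∀ l, IsLongestPathList G l → Crosses l (descendants G r x) → b ∈ l ∨ b' ∈ l) ∨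
      ∃ b b', b ≠ b' ∧ (∃ c, IsBranch G r x b b' c) ∧
        ∀ l, IsLongestPathList G l → Crosses l (descendants G r x) → b ∉ l → b' ∉ l →
          ∃ c, IsBranch G r x b b' c ∧ Meets l (descendants G r c) := by
  obtain ⟨b, b', hmeets⟩ := hr.exists_forall_crosses_meets_branch x
  by_cases hbranch : b ≠ b' ∧ ∃ c, IsBranch G r x b b' c
  · exact .inr ⟨b, b', hbranch.1, hbranch.2,
      fun l hl hcross hb hb' => (hmeets l hl hcross hb hb').2⟩
  · refine .inl ⟨b, b', fun l hl hcross => ?_⟩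
    by_contra! hbb'
    obtain ⟨hne, c, hc, -⟩ := hmeets l hl hcross hbb'.1 hbb'.2
    exact hbranch ⟨hne, c, hc⟩

theorem exists_transversal_of_not_hasEndIn (hx : (descendants G r x).ncard < 2 ^ k) :
    ∃ A : Finset V, A.card ≤ 4 * k ∧ ∀ l, IsLongestPathList G l →
      Meets l (descendants G r x) → ¬ HasEndIn l (descendants G r x) → ∃ z ∈ l, z ∈ A := by
  classical
  induction k generalizing x with
  | zero =>
    have hpos := (Set.ncard_pos (s := descendants G r x)).2 ⟨x, mem_descendants_self⟩
    omega
  | succ k ih =>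
    rcases hr.exists_pair_or_isBranch x with ⟨b, b', hpair⟩ | ⟨b, b', hne, ⟨c₀, hc₀⟩, hbranch⟩
    · refine ⟨{b, b'}, Finset.card_le_two.trans (by omega), fun l hl hmeets hend => ?_⟩
      simpa [and_or_left, exists_or] using hpair l hl (hmeets.crosses_of_not_hasEndIn hend)
    obtain ⟨a, a', d, hd, hmid⟩ := hc₀.exists_forall_not_hasEndIn_meets hne
    obtain ⟨A, hcard, hA⟩ := ih (hd.ncard_lt hx)
    refine ⟨{b, b', a, a'} ∪ A, ?_, fun l hl hmeets hend => ?_⟩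
    · have hfour : ({b, b', a, a'} : Finset V).card ≤ 4 := Finset.card_le_four
      exact (Finset.card_union_le _ _).trans (by omega)
    · by_contra! havoid
      simp only [Finset.mem_union, Finset.mem_insert, Finset.mem_singleton, not_or] at havoid
      obtain ⟨c, hc, hlc⟩ := hbranch l hl (hmeets.crosses_of_not_hasEndIn hend)
        (by grind) (by grind)
      have hld : Meets l (descendants G r d) := hmid l hl (by grind) (by grind) (by grind)
        (by grind) c hc hlc fun h => hend (h.mono hc.subset)
      obtain ⟨z, hz, hzA⟩ := hA l hl hld fun h => hend (h.mono hd.subset)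
      exact (havoid z hz).2 hzA

theorem exists_transversal_of_crosses (hx : (descendants G r x).ncard < 2 ^ k) :
    ∃ A : Finset V, A.card ≤ k * (2 * k + 3) ∧ ∀ l, IsLongestPathList G l →
      Crosses l (descendants G r x) → ∃ z ∈ l, z ∈ A := by
  classical
  induction k generalizing x with
  | zero =>
    have hpos := (Set.ncard_pos (s := descendants G r x)).2 ⟨x, mem_descendants_self⟩
    omega
  | succ k ih =>
    rcases hr.exists_pair_or_isBranch x with ⟨b, b', hpair⟩ | ⟨b, b', hne, ⟨c₀, hc₀⟩, hbranch⟩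
    · refine ⟨{b, b'}, Finset.card_le_two.trans (by nlinarith), fun l hl hcross => ?_⟩
      simpa [and_or_left, exists_or] using hpair l hl hcross
    obtain ⟨a, a', d, hd, hmid⟩ := hc₀.exists_forall_not_hasEndIn_meets hne
    obtain ⟨e, d', hd', hend⟩ := hc₀.exists_forall_hasEndIn_meets
    obtain ⟨A, hAcard, hA⟩ := hr.exists_transversal_of_not_hasEndIn (hd.ncard_lt hx)
    obtain ⟨A', hA'card, hA'⟩ := ih (hd'.ncard_lt hx)
    refine ⟨{b, b', a, a', e} ∪ A ∪ A', ?_, fun l hl hcross => ?_⟩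
    · have hfive : ({b, b', a, a', e} : Finset V).card ≤ 5 := Finset.card_le_five
      calc _ ≤ _ := Finset.card_union_le _ _
        _ ≤ 5 + 4 * k + k * (2 * k + 3) :=
          add_le_add ((Finset.card_union_le _ _).trans (add_le_add hfive hAcard)) hA'card
        _ = (k + 1) * (2 * (k + 1) + 3) := by ring
    · by_contra! havoid
      simp only [Finset.mem_union, Finset.mem_insert, Finset.mem_singleton, not_or] at havoid
      have hout : ∀ c, IsBranch G r x b b' c → Meets l (descendants G r c)ᶜ := fun c hc =>
        hcross.2.mono (Set.compl_subset_compl.2 hc.subset)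
      have hld' : ¬ Meets l (descendants G r d') := fun h => by
        obtain ⟨z, hz, hzA'⟩ := hA' l hl ⟨h, hout d' hd'⟩
        exact (havoid z hz).2 hzA'
      have hnoEnd : ∀ c, IsBranch G r x b b' c → ¬ HasEndIn l (descendants G r c) :=
        fun c hc h => hld' (hend l hl (by grind) (by grind) c hc h (hout c hc))
      obtain ⟨c, hc, hlc⟩ := hbranch l hl hcross (by grind) (by grind)
      have hld : Meets l (descendants G r d) := hmid l hl (by grind) (by grind) (by grind)
        (by grind) c hc hlc (hnoEnd c hc)
      obtain ⟨z, hz, hzA⟩ := hA l hl hld (hnoEnd d hd)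
      exact (havoid z hz).1.2 hzA

/-- Among the subtrees met by all longest paths avoiding some vertex, the one whose root `y` has
minimal rank is also left by them: a path witnessing the transversal property for the bag of `y`
cannot enter the subtree of a child of `y`. -/
theorem exists_forall_crosses_descendants (hconn : G.Connected) :
    ∃ y a a', ∀ l, IsLongestPathList G l → a ∉ l → a' ∉ l → Crosses l (descendants G r y) := by
  let IsTarget (y : V) : Prop :=
    ∃ a, ∀ l, IsLongestPathList G l → a ∉ l → Meets l (descendants G r y)
  obtain ⟨t, ht⟩ := hr.exists_descendants_eq_univ hconn
  have htarget : IsTarget t := ⟨t, fun l hl _ => by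
    have := hconn.nonempty
    exact hl.exists_mem.imp fun z hz => ⟨hz, ht ▸ Set.mem_univ z⟩⟩
  obtain ⟨y, ⟨a, ha⟩, hmin⟩ := (measure r).wf.has_min {y | IsTarget y} ⟨t, htarget⟩
  obtain ⟨a', m, hm, hmbag, hmeets⟩ := exists_isChain_avoiding_isClique hconn (hr.isClique_bag y)
  have hmy : ∀ w ∈ m, w ∉ descendants G r y := by
    intro w hw hwy
    rcases Relation.ReflTransGen.cases_tail hwy with rfl | ⟨c, hwc, hcy⟩
    · exact hmbag _ hw (.inl rfl)
    have hmc := hr.subset_descendants_of_avoids_laterNeighbors hm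
      (fun z hz hzc => hmbag z hz (hr.laterNeighbors_subset_bag hcy hzc)) hw hwc
    refine hmin c ⟨a', fun l hl ha'l => ?_⟩ hcy.1.1
    exact (hmeets l hl ha'l).imp fun z hz => ⟨hz.1, hmc z hz.2⟩
  exact ⟨y, a, a', fun l hl hal ha'l => ⟨ha l hl hal,
    (hmeets l hl ha'l).imp fun z hz => ⟨hz.1, hmy z hz.2⟩⟩⟩

theorem exists_longestPath_transversal (hconn : G.Connected) (hk : Nat.card V < 2 ^ k) :
    ∃ A : Finset V, A.card ≤ k * (2 * k + 3) + 2 ∧ ∀ l, IsLongestPathList G l →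
      ∃ z ∈ l, z ∈ A := by
  classical
  obtain ⟨y, a, a', hcross⟩ := hr.exists_forall_crosses_descendants hconn
  obtain ⟨A, hcard, hA⟩ := hr.exists_transversal_of_crosses
    ((Set.ncard_le_card (descendants G r y)).trans_lt hk)
  refine ⟨A ∪ {a, a'}, (Finset.card_union_le _ _).trans (add_le_add hcard Finset.card_le_two),
    fun l hl => ?_⟩
  by_contra! havoid
  simp only [Finset.mem_union, Finset.mem_insert, Finset.mem_singleton, not_or] at havoid
  obtain ⟨z, hz, hzA⟩ := hA l hl (hcross l hl (by grind) (by grind))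
  exact (havoid z hz).1 hzA

end IsPerfectElimination

theorem lpt_le_card {V : Type} {G : SimpleGraph V} (A : Finset V)
    (hA : ∀ l, IsLongestPathList G l → ∃ z ∈ l, z ∈ A) : lpt G ≤ A.card := by
  refine Nat.sInf_le ⟨A, A.finite_toSet, Set.ncard_coe_finset A, fun a b p hp => ?_⟩
  obtain ⟨z, hz, hzA⟩ := hA _ hp.isLongestPathList_support
  exact ⟨z, hzA, hz⟩

/-- If `G` is a connected `n`-vertex chordal graph, then
`lpt(G) ≤ (4(1 + ⌊log₂ n⌋) + 5)(1 + ⌊log₂ n⌋)`. -/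
theorem lpt_le_of_connected_chordal {V : Type} [Fintype V] (G : SimpleGraph V)
    (hconn : G.Connected) (hchordal : IsChordal G) :
    lpt G ≤ (4 * (1 + Nat.log 2 (Fintype.card V)) + 5) * (1 + Nat.log 2 (Fintype.card V)) := by
  obtain ⟨r, hr⟩ := hchordal.exists_isPerfectElimination
  set k := 1 + Nat.log 2 (Fintype.card V) with hk
  have hcard : Nat.card V < 2 ^ k := by
    rw [Nat.card_eq_fintype_card, hk, add_comm]
    exact Nat.lt_pow_succ_log_self one_lt_two _
  obtain ⟨A, hAcard, hA⟩ := hr.exists_longestPath_transversal hconn hcard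
  calc lpt G ≤ A.card := lpt_le_card A hA
    _ ≤ k * (2 * k + 3) + 2 := hAcard
    _ ≤ (4 * k + 5) * k := by nlinarith [show 1 ≤ k from Nat.le_add_right 1 _]
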